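/- Let T : M → M be any mapping. Then T commutes with the probability distortion T_d for every distortion function d (i.e., T ∘ T_d = T_d ∘ T for all d ∈ F_D) if and only if there exists a utility function u ∈ F_U (increasing and continuous) such that T = T^u. -/

import Mathlib

/-!
A cdf `F` is determined by the family of equivalences `p ≤ F x ↔ q ≤ x`, `p ∈ (0, 1]`, where `q` is
the left `p`-quantile of `F`. Distorting `F` by the step function `1_{t ≥ p}` produces the point
mass at `q`, so distortions detect quantiles.

If `T` commutes with all distortions, then it maps a point mass at `a` to a point mass, at `u a`
say (`exists_T_pointMass`), and commuting with `1_{t ≥ p}` shows that the `p`-quantile of `T F` is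
`u` of the `p`-quantile of `F` (`le_T_iff`). Applied to uniform distributions this makes `u`
monotone (`monotone_of_commute`) and left-continuous; right-continuity comes from the step function
`1_{t > 1/2}` (`continuous_of_commute`). The distribution `T^u F` has the same quantiles
(`le_utilityT_iff`), hence `T F = T^u F`.

Conversely, if `{u ≤ x} = (-∞, m]`, then `T^u F x = F m`. By continuity of `u`, `T^u F y` for
`y ↓ x` is interlaced with `F z` for `z ↓ m`, so the right limits of `d ∘ T^u F` at `x` and of
`d ∘ F` at `m` agree (`utilityT_distortT`).
-/

open MeasureTheory Filter Topology Set

noncomputable section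

/-- The set of cdfs of compactly supported probability distributions on ℝ:
increasing, right-continuous, equal to `0` for all sufficiently small `x` and
equal to `1` for all sufficiently large `x`. -/
def mSet : Set (ℝ → ℝ) :=
  {F | Monotone F ∧ (∀ x, ContinuousWithinAt F (Set.Ici x) x) ∧
    (∃ a, ∀ x ≤ a, F x = 0) ∧ (∃ b, ∀ x, b ≤ x → F x = 1)}

/-- The set of cdfs of all probability distributions on ℝ: increasing,
right-continuous, with limit `0` at `-∞` and limit `1` at `+∞`. -/
def m0Set : Set (ℝ → ℝ) :=
  {F | Monotone F ∧ (∀ x, ContinuousWithinAt F (Set.Ici x) x) ∧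
    Tendsto F atBot (𝓝 0) ∧ Tendsto F atTop (𝓝 1)}

/-- A utility function: increasing (non-strict) and continuous. -/
def IsUF (u : ℝ → ℝ) : Prop := Monotone u ∧ Continuous u

/-- An increasing and left-continuous function on ℝ. -/
def IsLeftCtsIncr (u : ℝ → ℝ) : Prop :=
  Monotone u ∧ ∀ x, ContinuousWithinAt u (Set.Iic x) x

/-- A distortion function: an increasing function `d : [0,1] → [0,1]` with
`d 0 = 0` and `d 1 = 1` (values outside `[0,1]` are irrelevant). -/
def IsDF (d : ℝ → ℝ) : Prop :=
  MonotoneOn d (Set.Icc 0 1) ∧ d 0 = 0 ∧ d 1 = 1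

/-- Right-continuity of a distortion function on `[0,1)`. -/
def DFRightCts (d : ℝ → ℝ) : Prop :=
  ∀ x ∈ Set.Ico (0:ℝ) 1, ContinuousWithinAt d (Set.Ioi x) x

/-- A distortion function with moreover `d(0+) = 0` and `d(1-) = 1`. -/
def IsDFhat (d : ℝ → ℝ) : Prop :=
  IsDF d ∧ Tendsto d (𝓝[>] (0:ℝ)) (𝓝 0) ∧ Tendsto d (𝓝[<] (1:ℝ)) (𝓝 1)

/-- The probability distortion generated by `d`:  `T_d F x = (d ∘ F)(x+)`,
the right limit of `d ∘ F` at `x`. -/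
noncomputable def distortT (d F : ℝ → ℝ) : ℝ → ℝ :=
  fun x => Function.rightLim (d ∘ F) x

/-- The utility transform `T^u`: it maps a cdf `F` to the cdf of the
pushforward under `u` of the probability measure with cdf `F`. -/
noncomputable def utilityT (u F : ℝ → ℝ) : ℝ → ℝ := by
  classical
  exact
    if h : Monotone F ∧ ∀ x, ContinuousWithinAt F (Set.Ici x) x then
      fun x => ((StieltjesFunction.measure ⟨F, h.1, h.2⟩).map u (Set.Iic x)).toReal
    else F

/-- Left quantile `F_L^{-1}(p) = inf {x | F x ≥ p}`. -/
noncomputable def leftQ (F : ℝ → ℝ) (p : ℝ) : ℝ := sInf {x | p ≤ F x}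

/-- Right quantile `F_R^{-1}(p) = inf {x | F x > p}`. -/
noncomputable def rightQ (F : ℝ → ℝ) (p : ℝ) : ℝ := sInf {x | p < F x}

/-! ### Basic facts on cdfs, step distortions and point masses -/

/-- The cdf of the point mass at `a`. -/
def pointMass (a : ℝ) : ℝ → ℝ := fun x => if a ≤ x then 1 else 0

/-- The distortion function `1_{t ≥ p}`. -/
def stepGe (p : ℝ) : ℝ → ℝ := fun t => if p ≤ t then 1 else 0

/-- The distortion function `1_{t > p}`. -/
def stepGt (p : ℝ) : ℝ → ℝ := fun t => if p < t then 1 else 0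

/-- The cdf of the uniform distribution on `[a, b]`, for `a < b`. -/
def unifCdf (a b : ℝ) : ℝ → ℝ := fun x => max 0 (min 1 ((x - a) / (b - a)))

lemma mSet_nonneg {F : ℝ → ℝ} (hF : F ∈ mSet) (x : ℝ) : 0 ≤ F x := by
  obtain ⟨hm, -, ⟨a, ha⟩, -⟩ := hF
  rw [← ha (min a x) (min_le_left _ _)]
  exact hm (min_le_right _ _)

lemma mSet_le_one {F : ℝ → ℝ} (hF : F ∈ mSet) (x : ℝ) : F x ≤ 1 := by
  obtain ⟨hm, -, -, ⟨b, hb⟩⟩ := hF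
  rw [← hb (max b x) (le_max_left _ _)]
  exact hm (le_max_right _ _)

lemma monotone_comp_mSet {d F : ℝ → ℝ} (hd : IsDF d) (hF : F ∈ mSet) : Monotone (d ∘ F) :=
  fun x y hxy => hd.1 ⟨mSet_nonneg hF x, mSet_le_one hF x⟩ ⟨mSet_nonneg hF y, mSet_le_one hF y⟩
    (hF.1 hxy)

lemma rightLim_eq_of_eventually {f : ℝ → ℝ} {x c : ℝ} (h : ∀ᶠ y in 𝓝[>] x, f y = c) :
    Function.rightLim f x = c :=
  rightLim_eq_of_tendsto (tendsto_const_nhds.congr' (h.mono fun _ hy => hy.symm))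

lemma distortT_mem {d F : ℝ → ℝ} (hd : IsDF d) (hF : F ∈ mSet) : distortT d F ∈ mSet := by
  have hm := monotone_comp_mSet hd hF
  refine ⟨hm.rightLim, fun x => ?_, ?_, ?_⟩
  · exact hm.stieltjesFunction.right_continuous' x
  · obtain ⟨a, ha⟩ := hF.2.2.1
    refine ⟨a - 1, fun x hx => rightLim_eq_of_eventually ?_⟩
    filter_upwards [Ioo_mem_nhdsGT (show x < a by linarith)] with y hy
    simp [ha y hy.2.le, hd.2.1]
  · obtain ⟨b, hb⟩ := hF.2.2.2
    refine ⟨b, fun x hx => rightLim_eq_of_eventually ?_⟩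
    filter_upwards [self_mem_nhdsWithin] with y hy
    simp [hb y (hx.trans (le_of_lt hy)), hd.2.2]

lemma isDF_stepGe {p : ℝ} (h0 : 0 < p) (h1 : p ≤ 1) : IsDF (stepGe p) := by
  refine ⟨fun s _ t _ hst => ?_, by simp [stepGe, h0], by simp [stepGe, h1]⟩
  unfold stepGe
  split_ifs <;> linarith

lemma isDF_stepGt {p : ℝ} (h0 : 0 ≤ p) (h1 : p < 1) : IsDF (stepGt p) := by
  refine ⟨fun s _ t _ hst => ?_, by simp [stepGt, h0], by simp [stepGt, h1]⟩
  unfold stepGt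
  split_ifs <;> linarith

lemma rightLim_pointMass (a x : ℝ) : Function.rightLim (pointMass a) x = pointMass a x := by
  apply rightLim_eq_of_eventually
  by_cases h : a ≤ x
  · filter_upwards [self_mem_nhdsWithin] with y hy
    simp [pointMass, h, h.trans (le_of_lt hy)]
  · filter_upwards [Ioo_mem_nhdsGT (not_le.1 h)] with y hy
    simp [pointMass, h, hy.2]

lemma pointMass_mem (a : ℝ) : pointMass a ∈ mSet := by
  have hm : Monotone (pointMass a) := by
    intro x y hxy
    unfold pointMass
    split_ifs <;> linarith
  refine ⟨hm, fun x => ?_, ⟨a - 1, fun x hx => ?_⟩, ⟨a, fun x hx => by simp [pointMass, hx]⟩⟩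
  · rw [← continuousWithinAt_Ioi_iff_Ici, hm.continuousWithinAt_Ioi_iff_rightLim_eq]
    exact rightLim_pointMass a x
  · have : ¬ a ≤ x := by linarith
    simp [pointMass, this]

lemma pointMass_injective : Function.Injective pointMass := by
  intro a b h
  apply le_antisymm
  · by_contra hab
    have := congrFun h b
    simp [pointMass, hab] at this
  · by_contra hab
    have := congrFun h a
    simp [pointMass, hab] at this

/-- Existence of the left quantile, as the threshold of the closed up-set `{p ≤ F}`. -/
lemma exists_quantile {F : ℝ → ℝ} (hF : F ∈ mSet) {p : ℝ} (h0 : 0 < p) (h1 : p ≤ 1) :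
    ∃ q, ∀ x, p ≤ F x ↔ q ≤ x := by
  obtain ⟨hm, hc, ⟨a, ha⟩, ⟨b, hb⟩⟩ := hF
  have hbd : BddBelow {x | p ≤ F x} := by
    refine ⟨a, fun x hx => ?_⟩
    by_contra hxa
    have := ha x (not_le.1 hxa).le
    change p ≤ F x at hx
    linarith
  have hne : {x | p ≤ F x}.Nonempty := ⟨b, by simp [hb b le_rfl, h1]⟩
  refine ⟨sInf {x | p ≤ F x}, fun x => ⟨fun hx => csInf_le hbd hx, fun hx => ?_⟩⟩
  have hq : p ≤ F (sInf {x | p ≤ F x}) := by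
    refine ge_of_tendsto ((hc (sInf {x | p ≤ F x})).mono Ioi_subset_Ici_self) ?_
    filter_upwards [self_mem_nhdsWithin] with y hy
    obtain ⟨z, hz, hzy⟩ := exists_lt_of_csInf_lt hne hy
    exact le_trans hz (hm hzy.le)
  exact hq.trans (hm hx)

lemma distortT_stepGe {F : ℝ → ℝ} {p q : ℝ} (h : ∀ x, p ≤ F x ↔ q ≤ x) :
    distortT (stepGe p) F = pointMass q := by
  have : stepGe p ∘ F = pointMass q := by
    funext x
    simp [stepGe, pointMass, h]
  funext x
  rw [distortT, this, rightLim_pointMass]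

lemma unifCdf_mem {a b : ℝ} (hab : a < b) : unifCdf a b ∈ mSet := by
  have hpos : 0 < b - a := sub_pos.2 hab
  refine ⟨fun x y hxy => ?_, fun x => ?_, ⟨a, fun x hx => ?_⟩, ⟨b, fun x hx => ?_⟩⟩
  · unfold unifCdf
    gcongr
  · have : Continuous (unifCdf a b) := by
      unfold unifCdf
      fun_prop
    exact this.continuousWithinAt
  · have : (x - a) / (b - a) ≤ 0 := div_nonpos_of_nonpos_of_nonneg (by linarith) hpos.le
    exact max_eq_left ((min_le_right _ _).trans this)
  · have : 1 ≤ (x - a) / (b - a) := by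
      rw [le_div_iff₀ hpos]
      linarith
    simp [unifCdf, min_eq_left this]

lemma le_unifCdf_iff {a b p : ℝ} (hab : a < b) (h0 : 0 < p) (h1 : p ≤ 1) (x : ℝ) :
    p ≤ unifCdf a b x ↔ a + (b - a) * p ≤ x := by
  have hpos : 0 < b - a := sub_pos.2 hab
  rw [unifCdf, le_max_iff, le_min_iff, le_div_iff₀ hpos]
  constructor
  · rintro (h | ⟨-, h⟩) <;> linarith
  · intro h
    exact Or.inr ⟨h1, by linarith⟩

/-! ### The utility transform -/

lemma tendsto_atBot_mSet {F : ℝ → ℝ} (hF : F ∈ mSet) : Tendsto F atBot (𝓝 0) := by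
  obtain ⟨a, ha⟩ := hF.2.2.1
  refine tendsto_const_nhds.congr' ?_
  filter_upwards [eventually_le_atBot a] with x hx
  exact (ha x hx).symm

lemma tendsto_atTop_mSet {F : ℝ → ℝ} (hF : F ∈ mSet) : Tendsto F atTop (𝓝 1) := by
  obtain ⟨b, hb⟩ := hF.2.2.2
  refine tendsto_const_nhds.congr' ?_
  filter_upwards [eventually_ge_atTop b] with x hx
  exact (hb x hx).symm

/-- `T^u F x` is the mass of the sublevel set `{u ≤ x}` under a probability measure with cdf `F`. -/
lemma exists_measure_utilityT {F u : ℝ → ℝ} (hF : F ∈ mSet) (hu : IsUF u) :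
    ∃ μ : Measure ℝ, IsProbabilityMeasure μ ∧ (∀ a, μ.real (Iic a) = F a) ∧
      ∀ x, utilityT u F x = μ.real {z | u z ≤ x} := by
  have h : Monotone F ∧ ∀ x, ContinuousWithinAt F (Set.Ici x) x := ⟨hF.1, hF.2.1⟩
  let f : StieltjesFunction ℝ := ⟨F, h.1, h.2⟩
  refine ⟨f.measure, ⟨?_⟩, fun a => ?_, fun x => ?_⟩
  · rw [f.measure_univ (tendsto_atBot_mSet hF) (tendsto_atTop_mSet hF)]
    simp
  · rw [Measure.real, f.measure_Iic (tendsto_atBot_mSet hF), sub_zero]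
    exact ENNReal.toReal_ofReal (mSet_nonneg hF a)
  · rw [utilityT, dif_pos h, Measure.map_apply hu.2.measurable measurableSet_Iic]
    rfl

lemma utilityT_le {F u : ℝ → ℝ} (hF : F ∈ mSet) (hu : IsUF u) {x a : ℝ}
    (h : ∀ z, u z ≤ x → z ≤ a) : utilityT u F x ≤ F a := by
  obtain ⟨μ, _, h1, h2⟩ := exists_measure_utilityT hF hu
  rw [h2, ← h1]
  exact measureReal_mono h

lemma le_utilityT {F u : ℝ → ℝ} (hF : F ∈ mSet) (hu : IsUF u) {x a : ℝ} (h : u a ≤ x) :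
    F a ≤ utilityT u F x := by
  obtain ⟨μ, _, h1, h2⟩ := exists_measure_utilityT hF hu
  rw [h2, ← h1]
  exact measureReal_mono fun z hz => (hu.1 hz).trans h

lemma utilityT_nonneg {F u : ℝ → ℝ} (hF : F ∈ mSet) (hu : IsUF u) (x : ℝ) :
    0 ≤ utilityT u F x := by
  obtain ⟨μ, _, h1, h2⟩ := exists_measure_utilityT hF hu
  rw [h2]
  exact measureReal_nonneg

lemma utilityT_le_one {F u : ℝ → ℝ} (hF : F ∈ mSet) (hu : IsUF u) (x : ℝ) :
    utilityT u F x ≤ 1 := by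
  obtain ⟨μ, _, h1, h2⟩ := exists_measure_utilityT hF hu
  rw [h2]
  exact measureReal_le_one

/-- The `p`-quantile of `T^u F` is `u q`, where `q` is the `p`-quantile of `F`. -/
lemma le_utilityT_iff {F u : ℝ → ℝ} (hF : F ∈ mSet) (hu : IsUF u) {p q : ℝ}
    (hq : ∀ x, p ≤ F x ↔ q ≤ x) (x : ℝ) : p ≤ utilityT u F x ↔ u q ≤ x := by
  refine ⟨fun h => ?_, fun h => ((hq q).2 le_rfl).trans (le_utilityT hF hu h)⟩
  by_contra hlt
  have hev : ∀ᶠ z in 𝓝[<] q, x < u z :=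
    (hu.2.continuousAt.eventually (lt_mem_nhds (not_le.1 hlt))).filter_mono nhdsWithin_le_nhds
  obtain ⟨a, hxa, haq⟩ := (hev.and self_mem_nhdsWithin).exists
  have hle : utilityT u F x ≤ F a := utilityT_le hF hu fun z hz => by
    by_contra hza
    exact absurd ((hu.1 (not_le.1 hza).le).trans hz) (not_le.2 hxa)
  exact absurd ((hq a).1 (h.trans hle)) (not_le.2 haq)

lemma sublevel_cases {u : ℝ → ℝ} (hu : IsUF u) (x : ℝ) :
    (∀ z, x < u z) ∨ (∀ z, u z ≤ x) ∨ ∃ m, ∀ z, u z ≤ x ↔ z ≤ m := by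
  by_cases h1 : ∀ z, x < u z
  · exact Or.inl h1
  by_cases h2 : ∀ z, u z ≤ x
  · exact Or.inr (Or.inl h2)
  push Not at h1 h2
  obtain ⟨w, hw⟩ := h2
  have hbd : BddAbove {z | u z ≤ x} := by
    refine ⟨w, fun z hz => ?_⟩
    by_contra hzw
    exact absurd ((hu.1 (not_le.1 hzw).le).trans hz) (not_le.2 hw)
  have hmem : sSup {z | u z ≤ x} ∈ {z | u z ≤ x} :=
    (isClosed_le hu.2 continuous_const).csSup_mem h1 hbd
  exact Or.inr (Or.inr ⟨sSup {z | u z ≤ x},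
    fun z => ⟨fun hz => le_csSup hbd hz, fun hz => (hu.1 hz).trans hmem⟩⟩)

/-- Utility transforms commute with distortions. -/
lemma utilityT_distortT {d F u : ℝ → ℝ} (hd : IsDF d) (hF : F ∈ mSet) (hu : IsUF u)
    (hK : utilityT u F ∈ mSet) : utilityT u (distortT d F) = distortT d (utilityT u F) := by
  have hH := distortT_mem hd hF
  funext x
  rcases sublevel_cases hu x with h | h | ⟨m, hm⟩
  · -- Empty sublevel set: both sides vanish.
    obtain ⟨a, ha⟩ := hF.2.2.1
    obtain ⟨a', ha'⟩ := hH.2.2.1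
    have e1 : utilityT u (distortT d F) x = 0 := by
      refine le_antisymm ?_ (utilityT_nonneg hH hu x)
      rw [← ha' a' le_rfl]
      exact utilityT_le hH hu fun z hz => absurd hz (not_le.2 (h z))
    rw [e1]
    refine (rightLim_eq_of_eventually ?_).symm
    filter_upwards [Ioo_mem_nhdsGT (h a)] with y hy
    have : utilityT u F y = 0 := by
      refine le_antisymm ?_ (utilityT_nonneg hF hu y)
      rw [← ha a le_rfl]
      refine utilityT_le hF hu fun z hz => ?_
      by_contra hza
      exact absurd ((hu.1 (not_le.1 hza).le).trans hz) (not_le.2 hy.2)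
    simp [this, hd.2.1]
  · -- Full sublevel set: both sides are `1`.
    obtain ⟨b, hb⟩ := hF.2.2.2
    obtain ⟨b', hb'⟩ := hH.2.2.2
    have e1 : utilityT u (distortT d F) x = 1 := by
      refine le_antisymm (utilityT_le_one hH hu x) ?_
      rw [← hb' b' le_rfl]
      exact le_utilityT hH hu (h b')
    rw [e1]
    refine (rightLim_eq_of_eventually ?_).symm
    filter_upwards [self_mem_nhdsWithin] with y hy
    have : utilityT u F y = 1 := by
      refine le_antisymm (utilityT_le_one hF hu y) ?_
      rw [← hb b le_rfl]
      exact le_utilityT hF hu ((h b).trans (le_of_lt hy))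
    simp [this, hd.2.2]
  · have e1 : utilityT u (distortT d F) x = distortT d F m :=
      le_antisymm (utilityT_le hH hu fun z hz => (hm z).1 hz)
        (le_utilityT hH hu ((hm m).2 le_rfl))
    rw [e1]
    have mF := monotone_comp_mSet hd hF
    have mK := monotone_comp_mSet hd hK
    have dmono : ∀ {s t : ℝ}, 0 ≤ s → s ≤ t → t ≤ 1 → d s ≤ d t := fun h0 hst h1 =>
      hd.1 ⟨h0, hst.trans h1⟩ ⟨h0.trans hst, h1⟩ hst
    apply le_antisymm
    · refine ge_of_tendsto (mK.tendsto_rightLim x) ?_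
      filter_upwards [self_mem_nhdsWithin] with y hy
      have hev : ∀ᶠ z in 𝓝[>] m, u z < y :=
        (hu.2.continuousAt.eventually
          (gt_mem_nhds (lt_of_le_of_lt ((hm m).2 le_rfl) hy))).filter_mono nhdsWithin_le_nhds
      obtain ⟨z, hz, hmz⟩ := (hev.and self_mem_nhdsWithin).exists
      exact (mF.rightLim_le hmz).trans
        (dmono (mSet_nonneg hF z) (le_utilityT hF hu hz.le) (mSet_le_one hK y))
    · refine ge_of_tendsto (mF.tendsto_rightLim m) ?_
      filter_upwards [self_mem_nhdsWithin] with z hz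
      have hxz : x < u z := by
        by_contra hzx
        exact absurd ((hm z).1 (not_lt.1 hzx)) (not_le.2 hz)
      obtain ⟨y, hxy, hyz⟩ := exists_between hxz
      refine (mK.rightLim_le hxy).trans
        (dmono (mSet_nonneg hK y) (utilityT_le hF hu fun w hw => ?_) (mSet_le_one hF z))
      by_contra hwz
      exact absurd ((hu.1 (not_le.1 hwz).le).trans hw) (not_le.2 hyz)

/-! ### Maps commuting with all distortions -/

/-- `T` commutes with every distortion on `mSet`. -/
def CommutesDistort (T : (ℝ → ℝ) → ℝ → ℝ) : Prop :=
  ∀ d : ℝ → ℝ, IsDF d → ∀ F ∈ mSet, T (distortT d F) = distortT d (T F)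

/-- The step distortion `1_{t ≥ 1}` fixes point masses and sends every cdf to a point mass. -/
lemma exists_T_pointMass {T : (ℝ → ℝ) → ℝ → ℝ} (hT : ∀ F ∈ mSet, T F ∈ mSet)
    (hc : CommutesDistort T) (a : ℝ) : ∃ b, T (pointMass a) = pointMass b := by
  obtain ⟨q, hq⟩ := exists_quantile (hT _ (pointMass_mem a)) one_pos le_rfl
  have hfix : distortT (stepGe 1) (pointMass a) = pointMass a := by
    refine distortT_stepGe fun x => ?_
    unfold pointMass
    split_ifs with h
    · simp [h]
    · simp [h]
  have h := hc _ (isDF_stepGe one_pos le_rfl) _ (pointMass_mem a)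
  rw [hfix, distortT_stepGe hq] at h
  exact ⟨q, h⟩

/-- The `p`-quantile of `T F` is `u q`, where `q` is the `p`-quantile of `F`. -/
lemma le_T_iff {T : (ℝ → ℝ) → ℝ → ℝ} (hT : ∀ F ∈ mSet, T F ∈ mSet)
    (hc : CommutesDistort T) {u : ℝ → ℝ} (hu : ∀ a, T (pointMass a) = pointMass (u a))
    {F : ℝ → ℝ} (hF : F ∈ mSet) {p q : ℝ} (h0 : 0 < p) (h1 : p ≤ 1)
    (hq : ∀ x, p ≤ F x ↔ q ≤ x) (x : ℝ) : p ≤ T F x ↔ u q ≤ x := by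
  obtain ⟨r, hr⟩ := exists_quantile (hT F hF) h0 h1
  have h := hc _ (isDF_stepGe h0 h1) F hF
  rw [distortT_stepGe hq, distortT_stepGe hr, hu] at h
  rw [hr, pointMass_injective h]

lemma monotone_of_commute {T : (ℝ → ℝ) → ℝ → ℝ} (hT : ∀ F ∈ mSet, T F ∈ mSet)
    (hc : CommutesDistort T) {u : ℝ → ℝ} (hu : ∀ a, T (pointMass a) = pointMass (u a)) :
    Monotone u := by
  intro a b hab
  -- `a` and `b` are the quantiles of orders `1 / (b - a + 1)` and `1` of the uniform law on
  -- `[a - 1, b]`.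
  have hlt : a - 1 < b := by linarith
  have hpos : 0 < b - (a - 1) := by linarith
  have hp0 : 0 < 1 / (b - (a - 1)) := by positivity
  have hp1 : 1 / (b - (a - 1)) ≤ 1 := by
    rw [div_le_one hpos]
    linarith
  have ha := le_T_iff hT hc hu (unifCdf_mem hlt) hp0 hp1 (le_unifCdf_iff hlt hp0 hp1) (u b)
  have hb := le_T_iff hT hc hu (unifCdf_mem hlt) one_pos le_rfl
    (le_unifCdf_iff hlt one_pos le_rfl) (u b)
  rw [show a - 1 + (b - (a - 1)) * (1 / (b - (a - 1))) = a by field_simp; ring] at ha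
  rw [show a - 1 + (b - (a - 1)) * 1 = b by ring] at hb
  exact ha.1 (hp1.trans (hb.2 le_rfl))

lemma continuous_of_commute {T : (ℝ → ℝ) → ℝ → ℝ} (hT : ∀ F ∈ mSet, T F ∈ mSet)
    (hc : CommutesDistort T) {u : ℝ → ℝ} (hu : ∀ a, T (pointMass a) = pointMass (u a)) :
    Continuous u := by
  have hmono := monotone_of_commute hT hc hu
  rw [continuous_iff_continuousAt]
  intro c
  have hlt : c - 1 < c + 1 := by linarith
  have hF := unifCdf_mem hlt
  have hG := hT _ hF
  have key : ∀ p : ℝ, 0 < p → p ≤ 1 → ∀ x,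
      p ≤ T (unifCdf (c - 1) (c + 1)) x ↔ u (c - 1 + 2 * p) ≤ x := by
    intro p h0 h1 x
    rw [le_T_iff hT hc hu hF h0 h1 (le_unifCdf_iff hlt h0 h1) x]
    ring_nf
  -- The distortion `1_{t > 1/2}` sends the uniform law to the point mass at its median `c`.
  have hright : distortT (stepGt (1 / 2)) (unifCdf (c - 1) (c + 1)) = pointMass c := by
    have hgt : ∀ x, 1 / 2 < unifCdf (c - 1) (c + 1) x ↔ c < x := by
      intro x
      rw [unifCdf, lt_max_iff, lt_min_iff, lt_div_iff₀ (by linarith)]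
      constructor
      · rintro (h | ⟨-, h⟩) <;> linarith
      · intro h
        exact Or.inr ⟨by norm_num, by linarith⟩
    funext x
    apply rightLim_eq_of_eventually
    by_cases h : c ≤ x
    · filter_upwards [self_mem_nhdsWithin] with y hy
      simp only [Function.comp, stepGt, hgt, pointMass, h, if_true]
      rw [if_pos (lt_of_le_of_lt h hy)]
    · filter_upwards [Ioo_mem_nhdsGT (not_le.1 h)] with y hy
      simp only [Function.comp, stepGt, hgt, pointMass, h, if_false]
      rw [if_neg (not_lt.2 hy.2.le)]
  have hcomm := hc _ (isDF_stepGt (p := 1 / 2) (by norm_num) (by norm_num)) _ hF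
  rw [hright, hu] at hcomm
  have hgt : ∀ x, u c < x → 1 / 2 < T (unifCdf (c - 1) (c + 1)) x := by
    intro x hx
    by_contra hle
    have hz : distortT (stepGt (1 / 2)) (T (unifCdf (c - 1) (c + 1))) (u c) = 0 := by
      apply rightLim_eq_of_eventually
      filter_upwards [Ioo_mem_nhdsGT hx] with y hy
      exact if_neg (not_lt.2 ((hG.1 hy.2.le).trans (not_lt.1 hle)))
    rw [← hcomm] at hz
    simp [pointMass] at hz
  refine tendsto_order.2 ⟨fun x hx => ?_, fun x hx => ?_⟩
  · have hG2 : T (unifCdf (c - 1) (c + 1)) x < 1 / 2 := by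
      by_contra hle
      have := (key (1 / 2) (by norm_num) (by norm_num) x).1 (not_lt.1 hle)
      rw [show c - 1 + 2 * (1 / 2) = c by ring] at this
      linarith
    obtain ⟨p, hp, hp2⟩ := exists_between hG2
    have hp0 : 0 < p := lt_of_le_of_lt (mSet_nonneg hG x) hp
    have hxp : x < u (c - 1 + 2 * p) := by
      by_contra hle
      have := (key p hp0 (by linarith) x).2 (not_lt.1 hle)
      linarith
    filter_upwards [lt_mem_nhds (show c - 1 + 2 * p < c by linarith)] with z hz
    exact hxp.trans_le (hmono hz.le)
  · obtain ⟨x', hx', hxx⟩ := exists_between hx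
    obtain ⟨p, hp2, hp⟩ := exists_between (hgt x' hx')
    have hup := (key p (by linarith) (hp.le.trans (mSet_le_one hG x')) x').1 hp.le
    filter_upwards [gt_mem_nhds (show c < c - 1 + 2 * p by linarith)] with z hz
    exact ((hmono hz.le).trans hup).trans_lt hxx

/-- A map `T : M → M` commutes with the probability distortion `T_d` for every
distortion function `d` if and only if `T = T^u` for some utility function `u`
(increasing and continuous). -/
theorem stmt2 (T : (ℝ → ℝ) → ℝ → ℝ) (hT : ∀ F ∈ mSet, T F ∈ mSet) :
    (∀ d : ℝ → ℝ, IsDF d → ∀ F ∈ mSet, T (distortT d F) = distortT d (T F)) ↔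
      ∃ u : ℝ → ℝ, IsUF u ∧ ∀ F ∈ mSet, T F = utilityT u F := by
  constructor
  · intro hc
    choose u hu using exists_T_pointMass hT hc
    have hU : IsUF u := ⟨monotone_of_commute hT hc hu, continuous_of_commute hT hc hu⟩
    refine ⟨u, hU, fun F hF => funext fun x => ?_⟩
    have key : ∀ p, 0 < p → p ≤ 1 → (p ≤ T F x ↔ p ≤ utilityT u F x) := by
      intro p h0 h1
      obtain ⟨q, hq⟩ := exists_quantile hF h0 h1
      rw [le_T_iff hT hc hu hF h0 h1 hq, le_utilityT_iff hF hU hq]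
    apply le_antisymm
    · rcases (mSet_nonneg (hT F hF) x).eq_or_lt with h | h
      · rw [← h]
        exact utilityT_nonneg hF hU x
      · exact (key _ h (mSet_le_one (hT F hF) x)).1 le_rfl
    · rcases (utilityT_nonneg hF hU x).eq_or_lt with h | h
      · rw [← h]
        exact mSet_nonneg (hT F hF) x
      · exact (key _ h (utilityT_le_one hF hU x)).2 le_rfl
  · rintro ⟨u, hU, h⟩ d hd F hF
    rw [h _ (distortT_mem hd hF), h F hF]
    exact utilityT_distortT hd hF hU (h F hF ▸ hT F hF)
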